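/- arXiv:2509.08537 — 2 statements merged into one kernel-verified Lean document; each statement's English description precedes it below -/
import Mathlib

section
/- L² bound for the time reconstruction error (Lemma 4.2, eq. (4.5c)): the time reconstruction Û satisfies ∫_I ‖V(t) − Û(t)‖²_H dt ≤ τ³ · c₂(q)² · ‖j‖²_H, where c₂(q)² = q/(4(q−2)(q−1)(2q−1)(2q+1)) for q ≥ 3 and c₂(2)² = 1/15. -/
open scoped RealInnerProductSpace
open MeasureTheory

/-- Evaluation of the `H`-valued polynomial with coefficients `c` (degree at most `k`):
`t ↦ ∑_{i=0}^{k} tⁱ • c i`. -/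
noncomputable def polyEval {H : Type*} [NormedAddCommGroup H] [NormedSpace ℝ H]
    (k : ℕ) (c : ℕ → H) (t : ℝ) : H :=
  ∑ i ∈ Finset.range (k + 1), t ^ i • c i

/-- Coefficients of the termwise derivative of the polynomial with coefficients `c`. -/
noncomputable def dC {H : Type*} [NormedAddCommGroup H] [NormedSpace ℝ H]
    (c : ℕ → H) : ℕ → H := fun i => ((i : ℝ) + 1) • c (i + 1)

/-- `u` is the coefficient function of the time reconstruction `Û` (a polynomial of degree at
most `q+1`) of the polynomial `V` with coefficient function `v` (degree at most `q`), with
jump `j`, on the interval `I = [t₀, t₁]`: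
(i) `∫_I ⟨Û'' - V'', W⟩ = ⟨j, W(t₀)⟩` for all `H`-valued polynomials `W` of degree at most `q-1`;
(ii) `Û(t₀) = V(t₀)`; (iii) `Û'(t₀) = V'(t₀) - j`. -/
def IsTimeRecon {H : Type*} [NormedAddCommGroup H] [InnerProductSpace ℝ H]
    (t₀ t₁ : ℝ) (q : ℕ) (v : ℕ → H) (j : H) (u : ℕ → H) : Prop :=
  (∀ i, q + 1 < i → u i = 0) ∧
  (∀ w : ℕ → H, (∀ i, q ≤ i → w i = 0) →
    (∫ t in t₀..t₁,
        ⟪polyEval (q + 1) (dC (dC u)) t - polyEval (q + 1) (dC (dC v)) t,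
          polyEval (q + 1) w t⟫) = ⟪j, polyEval (q + 1) w t₀⟫) ∧
  polyEval (q + 1) u t₀ = polyEval (q + 1) v t₀ ∧
  polyEval (q + 1) (dC u) t₀ = polyEval (q + 1) (dC v) t₀ - j

/-- The constant `c₂(q)²`: `q / (4(q-2)(q-1)(2q-1)(2q+1))` for `q ≥ 3` and `1/15` for `q = 2`. -/
noncomputable def c2sq (q : ℕ) : ℝ :=
  if q = 2 then 1 / 15
  else (q : ℝ) / (4 * ((q : ℝ) - 2) * ((q : ℝ) - 1) * (2 * (q : ℝ) - 1) * (2 * (q : ℝ) + 1))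

open Polynomial in
/-- integral functional -/
noncomputable def LL (a b : ℝ) (p : ℝ[X]) : ℝ := ∫ x in a..b, p.eval x

open Polynomial in
/-- all coefficients from index `n` on vanish -/
def dlt (p : ℝ[X]) (n : ℕ) : Prop := ∀ i, n ≤ i → p.coeff i = 0

open Polynomial in
/-- antiderivative -/
noncomputable def anti0 (p : ℝ[X]) : ℝ[X] :=
  ∑ i ∈ Finset.range (p.natDegree + 1), monomial (i + 1) (p.coeff i / (i + 1))

open Polynomial in
/-- antiderivative vanishing at `a` -/
noncomputable def anti (a : ℝ) (p : ℝ[X]) : ℝ[X] := anti0 p - C ((anti0 p).eval a)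

open Polynomial in
/-- Legendre polynomials on `[a,b]` -/
noncomputable def leg (a b : ℝ) : ℕ → ℝ[X]
  | 0 => 1
  | 1 => C (2 / (b - a)) * (X - C a) - 1
  | (n + 2) => leg a b n + C (2 * (2 * n + 3) / (b - a)) * anti a (leg a b (n + 1))

section legendre
open Polynomial

lemma LL_add (a b : ℝ) (p q : ℝ[X]) : LL a b (p + q) = LL a b p + LL a b q := by
  unfold LL
  rw [← intervalIntegral.integral_add]
  · simp
  · exact p.continuous.intervalIntegrable _ _
  · exact q.continuous.intervalIntegrable _ _

lemma LL_C_mul (a b c : ℝ) (p : ℝ[X]) : LL a b (C c * p) = c * LL a b p := by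
  unfold LL
  rw [← intervalIntegral.integral_const_mul]
  simp

lemma LL_sub (a b : ℝ) (p q : ℝ[X]) : LL a b (p - q) = LL a b p - LL a b q := by
  have := LL_add a b (p - q) q
  rw [sub_add_cancel] at this
  linarith

lemma LL_deriv (a b : ℝ) (p : ℝ[X]) : LL a b (derivative p) = p.eval b - p.eval a := by
  unfold LL
  exact intervalIntegral.integral_eq_sub_of_hasDerivAt (fun x _ => p.hasDerivAt x)
    ((derivative p).continuous.intervalIntegrable _ _)

lemma LL_parts (a b : ℝ) (f g : ℝ[X]) : LL a b (f * derivative g) =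
    f.eval b * g.eval b - f.eval a * g.eval a - LL a b (derivative f * g) := by
  have := LL_deriv a b (f * g)
  rw [derivative_mul, LL_add] at this
  simp only [eval_mul] at this
  linarith

lemma anti0_coeff_succ (p : ℝ[X]) (k : ℕ) : (anti0 p).coeff (k + 1) = p.coeff k / (k + 1) := by
  unfold anti0
  simp only [finsetSum_coeff, coeff_monomial]
  simp only [add_left_inj, Finset.sum_ite_eq', Finset.mem_range]
  split_ifs with h
  · rfl
  · rw [coeff_eq_zero_of_natDegree_lt (by omega)]; simp

lemma anti_coeff_succ (a : ℝ) (p : ℝ[X]) (k : ℕ) :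
    (anti a p).coeff (k + 1) = p.coeff k / (k + 1) := by
  unfold anti
  rw [coeff_sub, anti0_coeff_succ, coeff_C_succ, sub_zero]

lemma anti_eval (a : ℝ) (p : ℝ[X]) : (anti a p).eval a = 0 := by
  simp [anti]

lemma anti_deriv (a : ℝ) (p : ℝ[X]) : derivative (anti a p) = p := by
  ext k
  rw [coeff_derivative, anti_coeff_succ]
  have : (k : ℝ) + 1 ≠ 0 := by positivity
  field_simp

lemma anti_dlt (a : ℝ) (p : ℝ[X]) (n : ℕ) (h : dlt p n) : dlt (anti a p) (n + 1) := by
  intro i hi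
  obtain ⟨k, rfl⟩ : ∃ k, i = k + 1 := ⟨i - 1, by omega⟩
  rw [anti_coeff_succ, h k (by omega), zero_div]

/-- the invariants -/
structure LegP (a b : ℝ) (p : ℝ[X]) (n : ℕ) : Prop where
  deg : dlt p (n + 1)
  lead : p.coeff n ≠ 0
  evb : p.eval b = 1
  eva : p.eval a = (-1) ^ n
  orth : ∀ w, dlt w n → LL a b (p * w) = 0

lemma LegP.norm {a b : ℝ} {p : ℝ[X]} {n : ℕ} (h : LegP a b p n) :
    LL a b (p * p) = (b - a) / (2 * n + 1) := by
  have h1 := LL_parts a b (p * p) (X - C a)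
  have h2 : dlt ((X - C a) * derivative p - C (n : ℝ) * p) n := by
    intro i hi
    have e : (X - C a) * derivative p = X * derivative p - C a * derivative p := by ring
    have e2 : p.coeff (i + 1) = 0 := h.deg _ (by omega)
    rw [e, coeff_sub, coeff_sub, coeff_C_mul, coeff_C_mul, coeff_derivative, e2]
    rcases i with _ | i
    · have : n = 0 := by omega
      subst this; simp
    · rw [coeff_X_mul, coeff_derivative]
      rcases Nat.eq_or_lt_of_le hi with h3 | h3
      · rw [h3]; push_cast; ring
      · rw [h.deg (i + 1) (by omega)]; ring
  have h3 := h.orth _ h2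
  have e : derivative (p * p) * (X - C a) =
      C 2 * (p * ((X - C a) * derivative p - C (n : ℝ) * p)) + C (2 * (n : ℝ)) * (p * p) := by
    rw [derivative_mul, C_mul, C_ofNat]; ring
  rw [e, LL_add, LL_C_mul, LL_C_mul, h3] at h1
  simp only [derivative_sub, derivative_X, derivative_C, sub_zero, mul_one, eval_mul, h.evb,
    eval_sub, eval_X, eval_C, sub_self, mul_zero] at h1
  have : (2 * (n : ℝ) + 1) ≠ 0 := by positivity
  rw [eq_div_iff this]; linarith

lemma LegP.decomp {a b : ℝ} {p : ℝ[X]} {n : ℕ} (h : LegP a b p n) (w : ℝ[X])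
    (hw : dlt w (n + 1)) : ∃ α r, w = C α * p + r ∧ dlt r n := by
  refine ⟨w.coeff n / p.coeff n, w - C (w.coeff n / p.coeff n) * p, by ring, ?_⟩
  intro i hi
  rw [coeff_sub, coeff_C_mul]
  rcases Nat.eq_or_lt_of_le hi with h3 | h3
  · subst h3
    rw [div_mul_cancel₀ _ h.lead, sub_self]
  · rw [hw i h3, h.deg i h3]; ring

lemma leg_deriv_succ_succ (a b : ℝ) (n : ℕ) : derivative (leg a b (n + 2)) =
    derivative (leg a b n) + C (2 * (2 * n + 3) / (b - a)) * leg a b (n + 1) := by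
  rw [leg, derivative_add, derivative_C_mul, anti_deriv]

lemma leg_zero (a b : ℝ) : LegP a b (leg a b 0) 0 := by
  rw [leg]
  refine ⟨?_, by simp, by simp, by simp, ?_⟩
  · intro i hi
    rw [coeff_one, if_neg (by omega)]
  · intro w hw
    have : w = 0 := by ext i; simpa using hw i (by omega)
    rw [this]; simp [LL]

lemma leg_one (a b : ℝ) (hab : a < b) : LegP a b (leg a b 1) 1 := by
  have h : b - a ≠ 0 := by linarith
  have hd : ∀ i, (leg a b 1).coeff (i + 1) = 2 / (b - a) * (if i = 0 then 1 else 0) := by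
    intro i
    rw [leg, coeff_sub, coeff_C_mul, coeff_sub, coeff_X, coeff_C_succ, coeff_one]
    simp [eq_comm]
  refine ⟨?_, ?_, ?_, ?_, ?_⟩
  · intro i hi
    obtain ⟨k, rfl⟩ : ∃ k, i = k + 1 := ⟨i - 1, by omega⟩
    rw [hd, if_neg (by omega), mul_zero]
  · rw [hd 0]; simp [h]
  · simp [leg]; field_simp; ring
  · simp [leg]
  · intro w hw
    have hw' : w = C (w.coeff 0) := by
      ext i; rcases i with _ | i
      · simp
      · rw [hw _ (by omega), coeff_C_succ]
    rw [hw', mul_comm, LL_C_mul]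
    have : leg a b 1 = derivative (C (1 / (b - a)) * (X - C a) * (X - C a) - X) := by
      rw [leg]
      simp only [derivative_sub, derivative_mul, derivative_C, derivative_X]
      rw [show (2 / (b - a)) = 1 / (b - a) + 1 / (b - a) by ring, C_add]
      ring
    rw [this, LL_deriv]
    simp

lemma leg_step (a b : ℝ) (hab : a < b) (n : ℕ) (h0 : LegP a b (leg a b n) n)
    (h1 : LegP a b (leg a b (n + 1)) (n + 1))
    (hB : ∃ B, dlt B (n + 1) ∧ derivative (leg a b (n + 1)) =
      C (2 * (2 * n + 1) / (b - a)) * leg a b n + derivative B) :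
    LegP a b (leg a b (n + 2)) (n + 2) := by
  have hba : b - a ≠ 0 := by linarith
  have hba' : 0 < b - a := by linarith
  set p0 := leg a b n with hp0
  set p1 := leg a b (n + 1) with hp1
  have hp2 : leg a b (n + 2) = p0 + C (2 * (2 * n + 3) / (b - a)) * anti a p1 := by rw [leg]
  set A := anti a p1 with hA
  have hAa : A.eval a = 0 := anti_eval _ _
  have hAd : derivative A = p1 := anti_deriv _ _
  have hAb : A.eval b = 0 := by
    have := LL_deriv a b A
    rw [hAd, hAa, sub_zero] at this
    rw [← this]
    have := h1.orth 1 (by intro i hi; rw [coeff_one, if_neg (by omega)])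
    rwa [mul_one] at this
  have parts : ∀ g, LL a b (A * derivative g) = - LL a b (p1 * g) := by
    intro g
    rw [LL_parts, hAa, hAb, hAd]; ring
  rw [hp2]
  have hn : (2 * (n : ℝ) + 3) ≠ 0 := by positivity
  have hn1 : (2 * (n : ℝ) + 1) ≠ 0 := by positivity
  refine ⟨?_, ?_, ?_, ?_, ?_⟩
  · intro i hi
    rw [coeff_add, coeff_C_mul, h0.deg i (by omega), anti_dlt a p1 _ h1.deg i (by omega)]
    ring
  · rw [coeff_add, coeff_C_mul, h0.deg _ (by omega), zero_add, anti_coeff_succ]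
    have := h1.lead
    have h3 : ((n + 1 : ℕ) : ℝ) + 1 ≠ 0 := by positivity
    exact mul_ne_zero (by positivity) (div_ne_zero this h3)
  · simp [hAb, h0.evb]
  · simp [hAa, h0.eva, pow_add]
  · intro w hw
    obtain ⟨α, w1, rfl, hw1⟩ := h1.decomp w hw
    obtain ⟨β, r, rfl, hr⟩ := h0.decomp w1 hw1
    have e1 : LL a b (A * p1) = 0 := by
      have := parts A
      rw [hAd, mul_comm p1 A] at this
      linarith
    have e2 : LL a b (p1 * p0) = 0 := h1.orth _ h0.deg
    have e3 : LL a b (A * r) = 0 := by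
      have := parts (anti a r)
      rw [anti_deriv, h1.orth _ (anti_dlt a r _ hr)] at this
      linarith
    have e4 := h0.orth r hr
    have e5 : LL a b (A * p0) * (2 * (2 * n + 3) / (b - a)) = - LL a b (p0 * p0) := by
      obtain ⟨B, hBd, hBe⟩ := hB
      have := parts (p1 - B)
      rw [derivative_sub, hBe, add_sub_cancel_right, mul_sub, LL_sub, h1.orth _ hBd, h1.norm,
        mul_left_comm, LL_C_mul] at this
      rw [h0.norm]
      push_cast at this
      field_simp at this ⊢
      linear_combination this
    have : (p0 + C (2 * (2 * n + 3) / (b - a)) * A) * (C α * p1 + (C β * p0 + r)) =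
      C α * (p1 * p0) + C β * (p0 * p0) + p0 * r +
        C (2 * (2 * n + 3) / (b - a)) * (C α * (A * p1) + C β * (A * p0) + A * r) := by ring
    rw [this]
    simp only [LL_add, LL_C_mul, e1, e2, e3, e4]
    linear_combination β * e5

lemma leg_all (a b : ℝ) (hab : a < b) (n : ℕ) :
    LegP a b (leg a b n) n ∧ LegP a b (leg a b (n + 1)) (n + 1) ∧
    ∃ B, dlt B (n + 1) ∧ derivative (leg a b (n + 1)) =
      C (2 * (2 * n + 1) / (b - a)) * leg a b n + derivative B := by
  induction n with
  | zero =>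
    refine ⟨leg_zero a b, leg_one a b hab, 0, fun i _ => by simp, ?_⟩
    simp [leg]
  | succ n ih =>
    obtain ⟨h0, h1, hB⟩ := ih
    refine ⟨h1, leg_step a b hab n h0 h1 hB, leg a b n, ?_, ?_⟩
    · intro i hi; exact h0.deg i (by omega)
    · rw [leg_deriv_succ_succ, add_comm]
      push_cast
      ring_nf

lemma LegP.orth_lt {a b : ℝ} {p r : ℝ[X]} {n m : ℕ} (h : LegP a b p n) (h' : LegP a b r m)
    (hm : m < n) : LL a b (p * r) = 0 :=
  h.orth _ fun i hi => h'.deg i (by omega)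

/-- The scalar reconstruction profile. -/
lemma exists_profile (a b : ℝ) (hab : a < b) (m : ℕ) : ∃ F : ℝ[X],
    dlt F (m + 4) ∧ F.eval a = 0 ∧ (derivative F).eval a = -1 ∧
    (∀ w, dlt w (m + 2) → LL a b (derivative (derivative F) * w) = w.eval a) ∧
    LL a b (F * F) = (b - a) ^ 3 * ((m + 2) /
      (2 * (2 * m + 3) * (2 * m + 5) * (2 * m + 1) * (2 * m + 7))) := by
  obtain ⟨h0, h1, -⟩ := leg_all a b hab m
  obtain ⟨h2, h3, -⟩ := leg_all a b hab (m + 2)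
  have d2 := leg_deriv_succ_succ a b m
  have d3 := leg_deriv_succ_succ a b (m + 1)
  rw [show m + 1 + 2 = m + 2 + 1 by ring, show m + 1 + 1 = m + 2 by ring] at d3
  have n0 := h0.norm
  have n1 := h1.norm
  have n2 := h2.norm
  have n3 := h3.norm
  have o10 := h1.orth_lt h0 (by omega)
  have o20 := h2.orth_lt h0 (by omega)
  have o30 := h3.orth_lt h0 (by omega)
  have o21 := h2.orth_lt h1 (by omega)
  have o31 := h3.orth_lt h1 (by omega)
  have o32 := h3.orth_lt h2 (by omega)
  set p0 := leg a b m
  set p1 := leg a b (m + 1)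
  set p2 := leg a b (m + 2)
  set p3 := leg a b (m + 2 + 1)
  have hba : b - a ≠ 0 := by linarith
  obtain ⟨s, hs⟩ : ∃ s : ℝ, s = - (-1) ^ m / 2 := ⟨_, rfl⟩
  have hsq : ((-1 : ℝ) ^ m) * (-1) ^ m = 1 := by rw [← mul_pow]; simp
  have hss : s * s = 1 / 4 := by rw [hs]; linear_combination hsq / 4
  obtain ⟨A, hA⟩ : ∃ A : ℝ, A = s * (b - a) / (2 * (2 * m + 5)) := ⟨_, rfl⟩
  obtain ⟨B, hB⟩ : ∃ B : ℝ, B = s * (b - a) / (2 * (2 * m + 3)) := ⟨_, rfl⟩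
  have m1 : (2 * (m : ℝ) + 1) ≠ 0 := by positivity
  have m3 : (2 * (m : ℝ) + 3) ≠ 0 := by positivity
  have m5 : (2 * (m : ℝ) + 5) ≠ 0 := by positivity
  have m7 : (2 * (m : ℝ) + 7) ≠ 0 := by positivity
  have hF : derivative (C A * (p3 - p1) - C B * (p2 - p0)) = C s * (p2 - p1) := by
    simp only [derivative_sub, derivative_C_mul]
    rw [d2, d3, add_sub_cancel_left, add_sub_cancel_left, ← mul_assoc, ← mul_assoc, ← C_mul,
      ← C_mul]
    have e1 : A * (2 * (2 * ((m + 1 : ℕ) : ℝ) + 3) / (b - a)) = s := by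
      rw [hA]; push_cast
      rw [show (2 * ((m : ℝ) + 1) + 3) = 2 * m + 5 by ring]
      field_simp
    have e2 : B * (2 * (2 * (m : ℝ) + 3) / (b - a)) = s := by
      rw [hB]
      field_simp
    rw [e1, e2]; ring
  refine ⟨C A * (p3 - p1) - C B * (p2 - p0), ?_, ?_, ?_, ?_, ?_⟩
  · intro i hi
    simp only [coeff_sub, coeff_C_mul]
    rw [h0.deg i (by omega), h1.deg i (by omega), h2.deg i (by omega), h3.deg i (by omega)]
    ring
  · simp only [eval_sub, eval_mul, eval_C, h0.eva, h1.eva, h2.eva, h3.eva]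
    ring
  · rw [hF]
    simp only [eval_sub, eval_mul, eval_C, h1.eva, h2.eva]
    rw [hs]; linear_combination - hsq
  · intro w hw
    rw [hF, mul_comm, LL_parts]
    have hw' : dlt (derivative w) (m + 1) := by
      intro i hi
      rw [coeff_derivative, hw _ (by omega), zero_mul]
    have e : derivative w * (C s * (p2 - p1)) = C s * (p2 * derivative w - p1 * derivative w) := by
      ring
    rw [e, LL_C_mul, LL_sub, h1.orth _ hw', h2.orth _ (fun i hi => hw' i (by omega))]
    simp only [eval_sub, eval_mul, eval_C, h1.eva, h2.eva, h1.evb, h2.evb]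
    rw [hs]; linear_combination w.eval a * hsq
  · have e : (C A * (p3 - p1) - C B * (p2 - p0)) * (C A * (p3 - p1) - C B * (p2 - p0)) =
      C (A * A) * (p3 * p3) + C (A * A) * (p1 * p1) + C (B * B) * (p2 * p2) + C (B * B) * (p0 * p0)
      - C (2 * A * A) * (p3 * p1) - C (2 * A * B) * (p3 * p2) + C (2 * A * B) * (p3 * p0)
      + C (2 * A * B) * (p2 * p1) - C (2 * A * B) * (p1 * p0) - C (2 * B * B) * (p2 * p0) := by
      simp only [C_mul, C_ofNat]; ring
    rw [e]
    simp only [LL_add, LL_sub, LL_C_mul, n0, n1, n2, n3, o10, o20, o30, o21, o31, o32]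
    have hAA : A * A = (b - a) ^ 2 / (16 * (2 * m + 5) ^ 2) := by
      rw [hA]; field_simp; linear_combination 16 * hss
    have hBB : B * B = (b - a) ^ 2 / (16 * (2 * m + 3) ^ 2) := by
      rw [hB]; field_simp; linear_combination 16 * hss
    rw [hAA, hBB]
    push_cast
    rw [show (2 * ((m : ℝ) + 2 + 1) + 1) = 2 * m + 7 by ring,
      show (2 * ((m : ℝ) + 2) + 1) = 2 * m + 5 by ring,
      show (2 * ((m : ℝ) + 1) + 1) = 2 * m + 3 by ring]
    field_simp
    ring

end legendre

section recon
open Polynomial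
variable {H : Type*} [NormedAddCommGroup H] [InnerProductSpace ℝ H]

lemma polyEval_sub (k : ℕ) (c d : ℕ → H) (t : ℝ) :
    polyEval k (fun i => c i - d i) t = polyEval k c t - polyEval k d t := by
  simp [polyEval, smul_sub, Finset.sum_sub_distrib]

lemma dC_sub (c d : ℕ → H) : dC (fun i => c i - d i) = fun i => dC c i - dC d i := by
  funext i; simp [dC, smul_sub]

lemma dC_poly (P : ℝ[X]) (j : H) :
    dC (fun i => P.coeff i • j) = fun i => (derivative P).coeff i • j := by
  funext i; simp only [dC, coeff_derivative, smul_smul]; rw [mul_comm]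

lemma eval_of_dlt (P : ℝ[X]) (k : ℕ) (hP : dlt P (k + 1)) (t : ℝ) :
    P.eval t = ∑ i ∈ Finset.range (k + 1), P.coeff i * t ^ i := by
  apply eval_eq_sum_range'
  rw [Nat.lt_succ_iff, natDegree_le_iff_coeff_eq_zero]
  intro N hN; exact hP N hN

lemma polyEval_poly (P : ℝ[X]) (k : ℕ) (hP : dlt P (k + 1)) (j : H) (t : ℝ) :
    polyEval k (fun i => P.coeff i • j) t = P.eval t • j := by
  rw [eval_of_dlt P k hP, Finset.sum_smul, polyEval]
  refine Finset.sum_congr rfl fun i _ => ?_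
  rw [smul_smul, mul_comm]

lemma polyEval_hasDerivAt (k : ℕ) (c : ℕ → H) (hc : c (k + 1) = 0) (t : ℝ) :
    HasDerivAt (polyEval k c) (polyEval k (dC c) t) t := by
  have h : HasDerivAt (fun t : ℝ => ∑ i ∈ Finset.range (k + 1), t ^ i • c i)
      (∑ i ∈ Finset.range (k + 1), ((i : ℝ) * t ^ (i - 1)) • c i) t :=
    HasDerivAt.fun_sum fun i _ => (hasDerivAt_pow i t).smul_const (c i)
  have e : polyEval k (dC c) t = ∑ i ∈ Finset.range (k + 1), ((i : ℝ) * t ^ (i - 1)) • c i := by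
    rw [Finset.sum_range_succ', polyEval, Finset.sum_range_succ]
    simp [dC, hc, smul_smul, mul_comm]
  rw [e]; exact h

lemma polyEval_continuous (k : ℕ) (c : ℕ → H) : Continuous (polyEval k c) := by
  unfold polyEval; fun_prop

lemma inner_polyEval (k : ℕ) (w : ℕ → H) (j : H) (n : ℕ) (hn : n ≤ k + 1)
    (hw : ∀ i, n ≤ i → w i = 0) :
    ∃ ω : ℝ[X], dlt ω n ∧ ∀ t, ω.eval t = ⟪j, polyEval k w t⟫ := by
  refine ⟨∑ i ∈ Finset.range (k + 1), monomial i ⟪j, w i⟫, ?_, ?_⟩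
  · intro i hi
    simp only [finsetSum_coeff, coeff_monomial]
    refine Finset.sum_eq_zero fun l _ => ?_
    split_ifs with h
    · rw [hw l (by omega), inner_zero_right]
    · rfl
  · intro t
    rw [polyEval, inner_sum, eval_finsetSum]
    refine Finset.sum_congr rfl fun i _ => ?_
    rw [eval_monomial, inner_smul_right, mul_comm]

lemma eq_zero_of_deriv (a b : ℝ) (f f' : ℝ → H) (hf : ∀ t, HasDerivAt f (f' t) t)
    (h0 : f a = 0) (h' : ∀ t ∈ Set.Icc a b, f' t = 0) : ∀ t ∈ Set.Icc a b, f t = 0 := by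
  intro t ht
  rw [← h0]
  refine constant_of_has_deriv_right_zero (f := f) (a := a) (b := b)
    (fun x _ => (hf x).continuousAt.continuousWithinAt) (fun x hx => ?_) t ht
  have := hf x
  rw [h' x ⟨hx.1, hx.2.le⟩] at this
  exact this.hasDerivWithinAt

lemma recon_eq (t₀ t₁ : ℝ) (h01 : t₀ < t₁) (q : ℕ) (hq : 2 ≤ q)
    (v : ℕ → H) (hv : ∀ i, q < i → v i = 0) (j : H)
    (u : ℕ → H) (hu : IsTimeRecon t₀ t₁ q v j u) (F : ℝ[X]) (hF : dlt F (q + 2))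
    (hF0 : F.eval t₀ = 0) (hF1 : (derivative F).eval t₀ = -1)
    (hF2 : ∀ w, dlt w q → LL t₀ t₁ (derivative (derivative F) * w) = w.eval t₀) :
    ∀ t ∈ Set.Icc t₀ t₁, polyEval (q + 1) v t - polyEval (q + 1) u t = - (F.eval t • j) := by
  obtain ⟨hu0, hui, hu1, hu2⟩ := hu
  have hFd : dlt (derivative F) (q + 2) := by
    intro i hi; rw [coeff_derivative, hF _ (by omega), zero_mul]
  have hFdd : dlt (derivative (derivative F)) (q + 2) := by
    intro i hi; rw [coeff_derivative, hFd _ (by omega), zero_mul]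
  set d : ℕ → H := fun i => (fun i => u i - v i) i - F.coeff i • j with hd
  have hdz : ∀ i, q + 1 < i → d i = 0 := by
    intro i hi
    simp only [hd]
    rw [hu0 i hi, hv i (by omega), hF i (by omega)]; simp
  have hd1z : ∀ i, q < i → dC d i = 0 := by
    intro i hi
    simp only [dC]; rw [hdz _ (by omega), smul_zero]
  have hd2z : ∀ i, q ≤ i → dC (dC d) i = 0 := by
    intro i hi
    rw [dC, hd1z _ (by omega), smul_zero]
  have e0 : ∀ t, polyEval (q + 1) d t =
      polyEval (q + 1) u t - polyEval (q + 1) v t - F.eval t • j := by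
    intro t
    rw [hd, polyEval_sub, polyEval_sub, polyEval_poly F _ hF]
  have e1 : ∀ t, polyEval (q + 1) (dC d) t =
      polyEval (q + 1) (dC u) t - polyEval (q + 1) (dC v) t - (derivative F).eval t • j := by
    intro t
    rw [hd, dC_sub, polyEval_sub, dC_poly, dC_sub, polyEval_sub, polyEval_poly _ _ hFd]
  have e2 : ∀ t, polyEval (q + 1) (dC (dC d)) t =
      polyEval (q + 1) (dC (dC u)) t - polyEval (q + 1) (dC (dC v)) t
        - (derivative (derivative F)).eval t • j := by
    intro t
    rw [hd, dC_sub, dC_poly, dC_sub, dC_sub, dC_sub, polyEval_sub, dC_poly, polyEval_sub,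
      polyEval_poly _ _ hFdd]
  set w := dC (dC d) with hw
  obtain ⟨ω, hω, hωe⟩ := inner_polyEval (q + 1) w j q (by omega) hd2z
  have hI := hui w hd2z
  have hcw := polyEval_continuous (q + 1) w
  have hI2 : (∫ t in t₀..t₁, ‖polyEval (q + 1) w t‖ ^ 2) = 0 := by
    have h2 := hF2 ω hω
    rw [hωe, ← hI, LL] at h2
    have hs : (∫ t in t₀..t₁, ⟪polyEval (q + 1) (dC (dC u)) t - polyEval (q + 1) (dC (dC v)) t,
          polyEval (q + 1) w t⟫) = (∫ t in t₀..t₁, ‖polyEval (q + 1) w t‖ ^ 2) +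
          ∫ t in t₀..t₁, (derivative (derivative F) * ω).eval t := by
      rw [← intervalIntegral.integral_add]
      · refine intervalIntegral.integral_congr fun t _ => ?_
        have : polyEval (q + 1) (dC (dC u)) t - polyEval (q + 1) (dC (dC v)) t =
          polyEval (q + 1) w t + (derivative (derivative F)).eval t • j := by
          rw [e2]; abel
        beta_reduce
        rw [this, inner_add_left, real_inner_self_eq_norm_sq, eval_mul, hωe, real_inner_smul_left]
      · exact (hcw.norm.pow 2).intervalIntegrable _ _
      · exact (Polynomial.continuous _).intervalIntegrable _ _
    linarith
  have hw0 : ∀ t ∈ Set.Icc t₀ t₁, polyEval (q + 1) w t = 0 := by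
    by_contra hne
    push Not at hne
    obtain ⟨t, ht, hne⟩ := hne
    have := intervalIntegral.integral_pos (f := fun t => ‖polyEval (q + 1) w t‖ ^ 2) h01
      ((hcw.norm.pow 2).continuousOn)
      (fun x _ => by positivity) ⟨t, ht, by positivity⟩
    linarith
  have hD1 := eq_zero_of_deriv t₀ t₁ (polyEval (q + 1) (dC d)) (polyEval (q + 1) w)
    (fun t => polyEval_hasDerivAt _ _ (hd1z _ (by omega)) t)
    (by rw [e1, hu2, hF1]; simp) hw0
  have hD0 := eq_zero_of_deriv t₀ t₁ (polyEval (q + 1) d) (polyEval (q + 1) (dC d))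
    (fun t => polyEval_hasDerivAt _ _ (hdz _ (by omega)) t)
    (by rw [e0, hu1, hF0]; simp) hD1
  intro t ht
  have := hD0 t ht
  rw [e0, sub_eq_zero] at this
  rw [← this]; abel

end recon

/-- L² bound for the time reconstruction error:
`∫_I ‖V - Û‖² ≤ τ³ · c₂(q)² · ‖j‖²`. -/
theorem time_reconstruction_L2_bound
    {H : Type*} [NormedAddCommGroup H] [InnerProductSpace ℝ H] [CompleteSpace H]
    (t₀ t₁ : ℝ) (h01 : t₀ < t₁) (q : ℕ) (hq : 2 ≤ q)
    (v : ℕ → H) (hv : ∀ i, q < i → v i = 0) (j : H)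
    (u : ℕ → H) (hu : IsTimeRecon t₀ t₁ q v j u) :
    (∫ t in t₀..t₁, ‖polyEval (q + 1) v t - polyEval (q + 1) u t‖ ^ 2)
      ≤ (t₁ - t₀) ^ 3 * c2sq q * ‖j‖ ^ 2 := by
  obtain ⟨m, rfl⟩ : ∃ m, q = m + 2 := ⟨q - 2, by omega⟩
  obtain ⟨F, hF, hF0, hF1, hF2, hF3⟩ := exists_profile t₀ t₁ h01 m
  have key := recon_eq t₀ t₁ h01 (m + 2) hq v hv j u hu F hF hF0 hF1 hF2
  have h1 : (∫ t in t₀..t₁, ‖polyEval (m + 2 + 1) v t - polyEval (m + 2 + 1) u t‖ ^ 2) =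
      LL t₀ t₁ (F * F) * ‖j‖ ^ 2 := by
    rw [LL, ← intervalIntegral.integral_mul_const]
    refine intervalIntegral.integral_congr fun t ht => ?_
    rw [Set.uIcc_of_le h01.le] at ht
    beta_reduce
    rw [key t ht, norm_neg, norm_smul, mul_pow, Real.norm_eq_abs, sq_abs, Polynomial.eval_mul]
    ring
  rw [h1, hF3]
  have hc : ((m : ℝ) + 2) / (2 * (2 * m + 3) * (2 * m + 5) * (2 * m + 1) * (2 * m + 7)) ≤
      c2sq (m + 2) := by
    unfold c2sq
    rcases m with _ | m
    · norm_num
    · rw [if_neg (by omega)]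
      push_cast
      have hm : (0 : ℝ) ≤ m := Nat.cast_nonneg m
      have e : 4 * ((m : ℝ) + 1 + 2 - 2) * (m + 1 + 2 - 1) * (2 * (m + 1 + 2) - 1)
          * (2 * (m + 1 + 2) + 1) = (2 * (m + 1) + 3) * (2 * (m + 1) + 5) *
            (4 * (m + 1) * (m + 2)) := by ring
      have e' : 2 * (2 * ((m : ℝ) + 1) + 3) * (2 * (m + 1) + 5) * (2 * (m + 1) + 1)
          * (2 * (m + 1) + 7) = (2 * (m + 1) + 3) * (2 * (m + 1) + 5) *
            (2 * (2 * (m + 1) + 1) * (2 * (m + 1) + 7)) := by ring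
      rw [e, e']
      apply div_le_div_of_nonneg_left
      · positivity
      · positivity
      · apply mul_le_mul_of_nonneg_left _ (by positivity)
        nlinarith
  have hτ : 0 < t₁ - t₀ := by linarith
  gcongr
end

section
/- L∞ bound for the time reconstruction error via interpolation (used in the proof of Lemma 5.2, bound on T₈): the time reconstruction Û satisfies sup_{t ∈ [t₀,t₁]} ‖V(t) − Û(t)‖²_H ≤ (∫_I ‖V(t) − Û(t)‖²_H dt)^{1/2} · (∫_I ‖V'(t) − Û'(t)‖²_H dt)^{1/2}, and consequently sup_{t ∈ [t₀,t₁]} ‖V(t) − Û(t)‖_H ≤ (c₁(q)·c₂(q))^{1/2} · τ · ‖j‖_H. -/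
open scoped RealInnerProductSpace
open MeasureTheory

/-- `c₁(q) = √(q / ((2q-1)(2q+1)))`. -/
noncomputable def c1 (q : ℕ) : ℝ :=
  Real.sqrt ((q : ℝ) / ((2 * (q : ℝ) - 1) * (2 * (q : ℝ) + 1)))

/-- `c₂(q) = √(q / (4(q-2)(q-1)(2q-1)(2q+1)))` for `q ≥ 3`, and `c₂(2) = √(1/15)`. -/
noncomputable def c2 (q : ℕ) : ℝ :=
  if q = 2 then Real.sqrt (1 / 15)
  else Real.sqrt
    ((q : ℝ) / (4 * ((q : ℝ) - 2) * ((q : ℝ) - 1) * (2 * (q : ℝ) - 1) * (2 * (q : ℝ) + 1)))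

section
open Polynomial
namespace TR

noncomputable def J (f : ℝ[X]) : ℝ := ∫ x in (0:ℝ)..1, f.eval x

lemma J_add (f g : ℝ[X]) : J (f + g) = J f + J g := by
  simp only [J, eval_add]
  exact intervalIntegral.integral_add (f.continuous.intervalIntegrable _ _)
    (g.continuous.intervalIntegrable _ _)

lemma J_C_mul (c : ℝ) (f : ℝ[X]) : J (C c * f) = c * J f := by
  simp [J]

lemma J_deriv (f : ℝ[X]) : J (derivative f) = f.eval 1 - f.eval 0 := by
  simp only [J]
  exact intervalIntegral.integral_eq_sub_of_hasDerivAt (fun x _ => f.hasDerivAt x)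
    ((derivative f).continuous.intervalIntegrable _ _)

lemma J_mono (f g : ℝ[X]) (h : ∀ x, f.eval x ≤ g.eval x) : J f ≤ J g :=
  intervalIntegral.integral_mono (by norm_num) (f.continuous.intervalIntegrable _ _)
    (g.continuous.intervalIntegrable _ _) h

noncomputable def W : ℝ[X] := X * (1 - X)

lemma eval_zero_iter (n m : ℕ) (h : m < n) : (derivative^[m] (W ^ n)).eval 0 = 0 := by
  have h1 : W ∣ derivative^[m] (W ^ n) :=
    (dvd_pow_self W (by omega)).trans (pow_sub_dvd_iterate_derivative_pow W n m)
  exact eval_eq_zero_of_dvd_of_eval_eq_zero h1 (by simp [W])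

lemma eval_one_iter (n m : ℕ) (h : m < n) : (derivative^[m] (W ^ n)).eval 1 = 0 := by
  have h1 : W ∣ derivative^[m] (W ^ n) :=
    (dvd_pow_self W (by omega)).trans (pow_sub_dvd_iterate_derivative_pow W n m)
  exact eval_eq_zero_of_dvd_of_eval_eq_zero h1 (by simp [W])

lemma J_parts (n m : ℕ) (h : m ≤ n) (f : ℝ[X]) :
    J (derivative^[m] (W ^ n) * f) = (-1) ^ m * J (W ^ n * derivative^[m] f) := by
  induction m generalizing f with
  | zero => simp
  | succ m ih =>
    have h1 := J_deriv (derivative^[m] (W ^ n) * f)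
    rw [derivative_mul, J_add, eval_mul, eval_mul, eval_zero_iter n m h, eval_one_iter n m h,
      ih (by omega)] at h1
    rw [Function.iterate_succ_apply', Function.iterate_succ_apply, pow_succ]
    linarith

lemma coeff_W (n i : ℕ) : (W ^ n).coeff (n + i) = (-1) ^ i * (n.choose i : ℝ) := by
  have h1 : (1 - X : ℝ[X]) = (1 + X).comp (C (-1) * X) := by simp; ring
  rw [W, mul_pow, add_comm, coeff_X_pow_mul, h1, ← pow_comp, comp_C_mul_X_coeff,
    coeff_one_add_X_pow]
  ring

lemma iter_two_mul (n : ℕ) : derivative^[2 * n] (W ^ n) = C ((-1) ^ n * ((2 * n).factorial : ℝ)) := by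
  ext m
  rw [coeff_iterate_derivative, show m + 2 * n = n + (n + m) by ring, coeff_W, coeff_C]
  split_ifs with h
  · subst h
    rw [show n + (n + 0) = 2 * n by ring, Nat.descFactorial_self]; simp; ring
  · rw [Nat.choose_eq_zero_of_lt (by omega)]; simp

lemma iter_two_mul' (n : ℕ) : derivative^[2 * n] (W ^ (n + 1)) =
    C ((-1) ^ (n + 1) * ((2 * n).factorial : ℝ) * (n + 1)) * (C ((n : ℝ) / 2) - C (2 * n + 1 : ℝ) * W) := by
  rcases Nat.eq_zero_or_pos n with rfl | hn
  · simp
  have hW : W = X - X ^ 2 := by rw [W]; ring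
  obtain ⟨n, rfl⟩ : ∃ k, n = k + 1 := ⟨n - 1, by omega⟩
  ext m
  rw [coeff_iterate_derivative, show m + 2 * (n + 1) = (n + 1 + 1) + (n + m) by ring, coeff_W,
    coeff_C_mul, coeff_sub, coeff_C_mul, coeff_C]
  rcases m with _ | _ | _ | m
  · rw [show n + 1 + 1 + (n + 0) = 2 * (n + 1) by ring, Nat.descFactorial_self, add_zero,
      show n + 1 + 1 = n + 2 by rfl, Nat.choose_symm_add, Nat.cast_choose_two]
    simp [W]; ring
  · have hd := Nat.factorial_mul_descFactorial (show 2 * (n + 1) ≤ 2 * (n + 1) + 1 by omega)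
    rw [show 2 * (n + 1) + 1 - 2 * (n + 1) = 1 by omega, Nat.factorial_succ (2 * (n + 1))] at hd
    simp only [Nat.factorial_one, one_mul] at hd
    rw [show n + 1 + 1 + (n + (0 + 1)) = 2 * (n + 1) + 1 by ring, hd,
      show n + (0 + 1) = n + 1 by ring, Nat.choose_symm_add, Nat.choose_one_right, hW]
    simp [coeff_X, coeff_X_pow]; ring
  · have hd := Nat.factorial_mul_descFactorial (show 2 * (n + 1) ≤ 2 * (n + 1) + 2 by omega)
    rw [show 2 * (n + 1) + 2 - 2 * (n + 1) = 2 by omega, Nat.factorial_succ (2 * (n + 1) + 1),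
      Nat.factorial_succ (2 * (n + 1))] at hd
    simp only [Nat.factorial_two] at hd
    have hd' : (((2 * (n + 1) + 2).descFactorial (2 * (n + 1)) : ℕ) : ℝ) =
        (2 * (n + 1) + 1 + 1) * ((2 * (n + 1) + 1) * ((2 * (n + 1)).factorial : ℝ)) / 2 := by
      have := congrArg (Nat.cast : ℕ → ℝ) hd
      push_cast at this
      linarith
    rw [show n + 1 + 1 + (n + (0 + 1 + 1)) = 2 * (n + 1) + 2 by ring, nsmul_eq_mul, hd',
      show n + (0 + 1 + 1) = n + 1 + 1 by ring, Nat.choose_self, hW]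
    simp [coeff_X, coeff_X_pow]; ring
  · rw [Nat.choose_eq_zero_of_lt (by omega), hW]
    simp [coeff_X, coeff_X_pow]

lemma J_W (n : ℕ) : J (W ^ n) = (n.factorial : ℝ) ^ 2 / ((2 * n + 1).factorial : ℝ) := by
  induction n with
  | zero => simp [J]
  | succ n ih =>
    have h1 := J_deriv (W ^ (n + 1) * derivative W)
    have h2 : derivative (W ^ (n + 1) * derivative W) =
        C ((n : ℝ) + 1) * W ^ n + C (-(4 * n + 6 : ℝ)) * W ^ (n + 1) := by
      rw [derivative_mul, derivative_pow]
      have h4 : (C 4 : ℝ[X]) = 4 := rfl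
      have h6 : (C 6 : ℝ[X]) = 6 := rfl
      simp [W, pow_succ, h4, h6]
      ring
    rw [h2, J_add, J_C_mul, J_C_mul, ih] at h1
    have h3 : J (W ^ (n + 1)) = (n + 1) / (4 * n + 6) * ((n.factorial : ℝ) ^ 2 / ((2 * n + 1).factorial : ℝ)) := by
      simp [W] at h1
      have : (4 * n + 6 : ℝ) ≠ 0 := by positivity
      rw [div_mul_eq_mul_div, eq_div_iff this]
      simp [W]
      linarith
    rw [h3, show 2 * (n + 1) + 1 = 2 * n + 1 + 1 + 1 by ring, Nat.factorial_succ n, Nat.factorial_succ (2 * n + 1 + 1),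
      Nat.factorial_succ (2 * n + 1)]
    push_cast
    have := Nat.factorial_pos (2 * n + 1)
    field_simp
    ring

/-- shifted Legendre -/
noncomputable def P (n : ℕ) : ℝ[X] := C ((n.factorial : ℝ)⁻¹) * derivative^[n] (W ^ n)

/-- primitive of `P (n+1)` -/
noncomputable def N (n : ℕ) : ℝ[X] := C (((n + 1).factorial : ℝ)⁻¹) * derivative^[n] (W ^ (n + 1))

lemma deriv_N (n : ℕ) : derivative (N n) = P (n + 1) := by
  rw [N, P, derivative_C_mul, Function.iterate_succ_apply']

lemma J_P_mul (n : ℕ) (f : ℝ[X]) (hf : f.natDegree < n) : J (P n * f) = 0 := by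
  rw [P, mul_assoc, J_C_mul, J_parts n n le_rfl, iterate_derivative_eq_zero hf]
  simp [J]

lemma natDegree_W : W.natDegree ≤ 2 := by
  rw [W]; compute_degree

lemma natDegree_P (n : ℕ) : (P n).natDegree ≤ n := by
  rw [P]
  refine (natDegree_C_mul_le _ _).trans ((natDegree_iterate_derivative _ _).trans ?_)
  have := natDegree_pow_le_of_le n natDegree_W
  omega

lemma J_P_sq (n : ℕ) : J (P n * P n) = 1 / (2 * n + 1) := by
  have h : P n * P n = C ((n.factorial : ℝ)⁻¹ ^ 2) * (derivative^[n] (W ^ n) * derivative^[n] (W ^ n)) := by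
    rw [P, C_pow]; ring
  rw [h, J_C_mul, J_parts n n le_rfl, ← Function.iterate_add_apply, ← two_mul, iter_two_mul,
    mul_comm (W ^ n), J_C_mul, J_W, Nat.factorial_succ]
  have h1 := Nat.factorial_pos n
  have h2 := Nat.factorial_pos (2 * n)
  have h3 : ((-1 : ℝ) ^ n) * (-1) ^ n = 1 := by rw [← mul_pow]; simp
  push_cast
  field_simp
  linear_combination h3

lemma J_N_sq (n : ℕ) : J (N n * N n) = 1 / (2 * (2 * n + 1) * (2 * n + 3) * (2 * n + 5)) := by
  have h : N n * N n = C (((n + 1).factorial : ℝ)⁻¹ ^ 2) *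
      (derivative^[n] (W ^ (n + 1)) * derivative^[n] (W ^ (n + 1))) := by
    rw [N, C_pow]; ring
  have h' : W ^ (n + 1) * (C ((n : ℝ) / 2) - C (2 * n + 1 : ℝ) * W) =
      C ((n : ℝ) / 2) * W ^ (n + 1) + C (-(2 * n + 1 : ℝ)) * W ^ (n + 2) := by
    rw [C_neg]; ring
  rw [h, J_C_mul, J_parts (n + 1) n (by omega), ← Function.iterate_add_apply, ← two_mul, iter_two_mul',
    mul_left_comm (W ^ (n + 1)), J_C_mul, h', J_add, J_C_mul, J_C_mul, J_W, J_W,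
    show 2 * (n + 2) + 1 = 2 * n + 1 + 1 + 1 + 1 + 1 by ring,
    show 2 * (n + 1) + 1 = 2 * n + 1 + 1 + 1 by ring, show n + 2 = n + 1 + 1 by ring]
  simp only [Nat.factorial_succ]
  have h1 := Nat.factorial_pos n
  have h2 := Nat.factorial_pos (2 * n)
  have h3 : ((-1 : ℝ) ^ n) * (-1) ^ n = 1 := by rw [← mul_pow]; simp
  have h4 : ((-1 : ℝ) ^ (n + 1)) = - (-1) ^ n := by ring
  rw [h4]
  push_cast
  generalize ((-1 : ℝ) ^ n) = s at *
  field_simp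
  ring_nf
  have h5 : s ^ 2 = 1 := by rw [sq, h3]
  rw [h5]
  ring

lemma P_zero (n : ℕ) : (P n).eval 0 = 1 := by
  have h1 := coeff_W n 0
  rw [add_zero] at h1
  rw [P, eval_C_mul, ← coeff_zero_eq_eval_zero, coeff_iterate_derivative, zero_add, h1,
    Nat.descFactorial_self]
  have := Nat.factorial_pos n
  simp
  field_simp

lemma P_one (n : ℕ) : (P n).eval 1 = (-1) ^ n := by
  have h : W.comp (1 - X) = W := by simp [W]; ring
  have h1 := iterate_derivative_comp_one_sub_X (W ^ n) n
  rw [pow_comp, h] at h1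
  have h2 := P_zero n
  have h3 := congrArg (eval 1) h1
  rw [P, eval_C_mul] at h2 ⊢
  rw [h3]
  simp only [eval_mul, eval_comp, eval_sub, eval_one, eval_X, sub_self, eval_pow, eval_neg]
  linear_combination (-1) ^ n * h2

/-- reference solution on [0,1], `q = n + 2` -/
noncomputable def e (n : ℕ) : ℝ[X] := C (1 / 2) * (N n + N (n + 1))

lemma deriv_e (n : ℕ) : derivative (e n) = C (1 / 2) * (P (n + 1) + P (n + 2)) := by
  rw [e, derivative_C_mul, derivative_add, deriv_N, deriv_N]

lemma e_zero (n : ℕ) : (e n).eval 0 = 0 := by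
  simp [e, N, eval_zero_iter (n + 1) n (by omega), eval_zero_iter (n + 1 + 1) (n + 1) (by omega),
    -Function.iterate_succ]

lemma e_one (n : ℕ) : (e n).eval 1 = 0 := by
  simp [e, N, eval_one_iter (n + 1) n (by omega), eval_one_iter (n + 1 + 1) (n + 1) (by omega),
    -Function.iterate_succ]

lemma de_zero (n : ℕ) : (derivative (e n)).eval 0 = 1 := by
  rw [deriv_e]; simp [P_zero]; norm_num

lemma de_one (n : ℕ) : (derivative (e n)).eval 1 = 0 := by
  rw [deriv_e]; simp [P_one]; ring

lemma natDegree_e (n : ℕ) : (e n).natDegree ≤ n + 3 := by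
  have h := natDegree_W
  have h1 := natDegree_pow_le_of_le (n + 1) h
  have h2 := natDegree_pow_le_of_le (n + 2) h
  have h3 := natDegree_iterate_derivative (W ^ (n + 1)) n
  have h4 := natDegree_iterate_derivative (W ^ (n + 2)) (n + 1)
  refine (natDegree_C_mul_le _ _).trans (natDegree_add_le_of_degree_le ?_ ?_)
  · refine (natDegree_C_mul_le _ _).trans ?_
    omega
  · refine (natDegree_C_mul_le _ _).trans (h4.trans ?_)
    omega

lemma e_test (n : ℕ) (w : ℝ[X]) (hw : w.natDegree < n + 2) :
    J (derivative (derivative (e n)) * w) = - w.eval 0 := by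
  have h1 := J_deriv (derivative (e n) * w)
  rw [derivative_mul, J_add, eval_mul, eval_mul, de_zero, de_one] at h1
  have h2 : J (derivative (e n) * derivative w) = 0 := by
    have h3 := natDegree_derivative_le w
    rw [deriv_e, mul_assoc, add_mul, J_C_mul, J_add, J_P_mul, J_P_mul]
    · simp
    · omega
    · omega
  linarith

lemma J_de_sq (n : ℕ) : J (derivative (e n) * derivative (e n)) =
    (n + 2) / ((2 * n + 3) * (2 * n + 5)) := by
  have h : derivative (e n) * derivative (e n) = C (1 / 4) * (P (n + 1) * P (n + 1) +
      (P (n + 2) * P (n + 2) + C 2 * (P (n + 2) * P (n + 1)))) := by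
    rw [deriv_e, show (1 / 4 : ℝ) = (1 / 2) * (1 / 2) by norm_num, C_mul,
      show (C 2 : ℝ[X]) = 2 from rfl]; ring
  rw [h, J_C_mul, J_add, J_add, J_C_mul, J_P_sq, J_P_sq,
    J_P_mul (n + 2) _ ((natDegree_P _).trans_lt (by omega))]
  push_cast
  field_simp
  ring

lemma J_e_sq (n : ℕ) : J (e n * e n) ≤
    (n + 2) / ((2 * n + 1) * (2 * n + 3) * (2 * n + 5) * (2 * n + 7)) := by
  have h : J (e n * e n) ≤ J (C (1 / 2) * (N n * N n + N (n + 1) * N (n + 1))) := by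
    apply J_mono
    intro x
    simp only [e, eval_mul, eval_add, eval_C]
    nlinarith [sq_nonneg ((N n).eval x - (N (n + 1)).eval x)]
  refine h.trans (le_of_eq ?_)
  rw [J_C_mul, J_add, J_N_sq, J_N_sq]
  push_cast
  field_simp
  ring

end TR

namespace TR

noncomputable def e0 (a b : ℝ) (n : ℕ) : ℝ[X] :=
  C (b - a) * (e n).comp (C (b - a)⁻¹ * X - C ((b - a)⁻¹ * a))

lemma integral_scale (a b : ℝ) (hab : a < b) (F : ℝ → ℝ) :
    ∫ t in a..b, F ((b - a)⁻¹ * t - (b - a)⁻¹ * a) = (b - a) * ∫ s in (0:ℝ)..1, F s := by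
  have h : b - a ≠ 0 := by linarith
  rw [intervalIntegral.integral_comp_mul_sub F (inv_ne_zero h)]
  rw [sub_self, ← mul_sub, inv_mul_cancel₀ h, inv_inv, smul_eq_mul]

lemma deriv_e0 (a b : ℝ) (hab : a < b) (n : ℕ) : derivative (e0 a b n) =
    (derivative (e n)).comp (C (b - a)⁻¹ * X - C ((b - a)⁻¹ * a)) := by
  have h : b - a ≠ 0 := by linarith
  rw [e0, derivative_C_mul, derivative_comp, ← mul_assoc]
  have : derivative (C (b - a)⁻¹ * X - C ((b - a)⁻¹ * a)) = C (b - a)⁻¹ := by simp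
  rw [this, ← C_mul, mul_inv_cancel₀ h]; simp

lemma deriv2_e0 (a b : ℝ) (hab : a < b) (n : ℕ) : derivative (derivative (e0 a b n)) =
    C (b - a)⁻¹ * (derivative (derivative (e n))).comp (C (b - a)⁻¹ * X - C ((b - a)⁻¹ * a)) := by
  rw [deriv_e0 a b hab, derivative_comp]
  have : derivative (C (b - a)⁻¹ * X - C ((b - a)⁻¹ * a)) = C (b - a)⁻¹ := by simp
  rw [this]

lemma e0_left (a b : ℝ) (n : ℕ) : (e0 a b n).eval a = 0 := by
  simp [e0, e_zero]

lemma e0_right (a b : ℝ) (hab : a < b) (n : ℕ) : (e0 a b n).eval b = 0 := by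
  have h : b - a ≠ 0 := by linarith
  have h2 : (b - a)⁻¹ * b - (b - a)⁻¹ * a = 1 := by rw [← mul_sub, inv_mul_cancel₀ h]
  simp [e0, h2, e_one]

lemma de0_left (a b : ℝ) (hab : a < b) (n : ℕ) : (derivative (e0 a b n)).eval a = 1 := by
  rw [deriv_e0 a b hab]; simp [de_zero]

lemma natDegree_e0 (a b : ℝ) (n : ℕ) : (e0 a b n).natDegree ≤ n + 3 := by
  refine (natDegree_C_mul_le _ _).trans (natDegree_comp_le.trans ?_)
  have h1 : (C (b - a)⁻¹ * X - C ((b - a)⁻¹ * a)).natDegree ≤ 1 := by compute_degree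
  calc _ ≤ (n + 3) * 1 := Nat.mul_le_mul (natDegree_e n) h1
    _ = _ := by ring

lemma e0_test (a b : ℝ) (hab : a < b) (n : ℕ) (w : ℝ[X]) (hw : w.natDegree < n + 2) :
    ∫ t in a..b, (derivative (derivative (e0 a b n))).eval t * w.eval t = - w.eval a := by
  have h : b - a ≠ 0 := by linarith
  have hdeg : (w.comp (C a + C (b - a) * X)).natDegree < n + 2 := by
    refine lt_of_le_of_lt natDegree_comp_le ?_
    have h1 : (C a + C (b - a) * X).natDegree ≤ 1 := by compute_degree
    calc _ ≤ w.natDegree * 1 := Nat.mul_le_mul le_rfl h1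
      _ < _ := by omega
  have h1 := e_test n _ hdeg
  have h2 := integral_scale a b hab (fun s => (b - a)⁻¹ *
    (derivative (derivative (e n)) * w.comp (C a + C (b - a) * X)).eval s)
  rw [intervalIntegral.integral_const_mul (a := 0) (b := 1)] at h2
  change _ = _ * (_ * J _) at h2
  rw [h1, mul_inv_cancel_left₀ h] at h2
  simp only [eval_comp, eval_add, eval_C, eval_mul, eval_X, mul_zero, add_zero] at h2
  rw [← h2]
  congr 1
  ext t
  have h3 : a + (b - a) * ((b - a)⁻¹ * t - (b - a)⁻¹ * a) = t := by
    rw [mul_sub, mul_inv_cancel_left₀ h, mul_inv_cancel_left₀ h]; ring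
  rw [deriv2_e0 a b hab]
  simp [h3, mul_assoc]

lemma int_e0_sq (a b : ℝ) (hab : a < b) (n : ℕ) :
    ∫ t in a..b, (e0 a b n).eval t ^ 2 = (b - a) ^ 3 * J (e n * e n) := by
  have h2 := integral_scale a b hab (fun s => (b - a) ^ 2 * (e n * e n).eval s)
  rw [intervalIntegral.integral_const_mul (a := 0) (b := 1)] at h2
  change _ = _ * (_ * J _) at h2
  rw [pow_succ', mul_assoc, ← h2]
  congr 1
  ext t
  simp [e0]; ring

lemma int_de0_sq (a b : ℝ) (hab : a < b) (n : ℕ) :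
    ∫ t in a..b, (derivative (e0 a b n)).eval t ^ 2 =
      (b - a) * J (derivative (e n) * derivative (e n)) := by
  have h2 := integral_scale a b hab (fun s => (derivative (e n) * derivative (e n)).eval s)
  change _ = _ * J _ at h2
  rw [← h2]
  congr 1
  ext t
  rw [deriv_e0 a b hab]
  simp; ring

lemma poly_zero_of_int (a b : ℝ) (hab : a < b) (f : ℝ[X])
    (h : ∫ t in a..b, f.eval t * f.eval t = 0) : f = 0 := by
  by_contra hf
  have : ∃ c ∈ Set.Icc a b, f.eval c ≠ 0 := by
    by_contra! hc
    exact hf (eq_zero_of_infinite_isRoot f ((Set.Icc_infinite hab).mono hc))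
  obtain ⟨c, hc, hfc⟩ := this
  have := intervalIntegral.integral_pos (f := fun t => f.eval t * f.eval t) hab
    (f.continuous.mul f.continuous).continuousOn (fun x _ => mul_self_nonneg _)
    ⟨c, hc, mul_self_pos.mpr hfc⟩
  linarith

lemma uniq (a b : ℝ) (hab : a < b) (n : ℕ) (d : ℝ[X]) (hd : d.natDegree ≤ n + 3) (κ : ℝ)
    (h0 : d.eval a = 0) (h1 : (derivative d).eval a = κ)
    (ht : ∀ w : ℝ[X], w.natDegree < n + 2 →
      ∫ t in a..b, (derivative (derivative d)).eval t * w.eval t = - (κ * w.eval a)) :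
    d = C κ * e0 a b n := by
  set g := d - C κ * e0 a b n with hg
  have hgd : g.natDegree ≤ n + 3 := by
    refine (natDegree_sub_le_of_le hd ((natDegree_C_mul_le _ _).trans (natDegree_e0 a b n))).trans ?_
    simp
  have hg2 : (derivative (derivative g)).natDegree < n + 2 := by
    have := natDegree_derivative_le g
    have := natDegree_derivative_le (derivative g)
    omega
  have hz : derivative (derivative g) = 0 := by
    apply poly_zero_of_int a b hab
    have e1 := ht _ hg2
    have e2 := e0_test a b hab n _ hg2
    have e3 : ∀ t, (derivative (derivative g)).eval t * (derivative (derivative g)).eval t =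
        (derivative (derivative d)).eval t * (derivative (derivative g)).eval t
        - κ * ((derivative (derivative (e0 a b n))).eval t * (derivative (derivative g)).eval t) := by
      intro t
      conv_lhs => enter [1]; rw [hg]
      simp; ring
    simp_rw [e3]
    rw [intervalIntegral.integral_sub, intervalIntegral.integral_const_mul, e1, e2]
    · ring
    · exact ((Polynomial.continuous _).mul (Polynomial.continuous _)).intervalIntegrable _ _
    · exact (((Polynomial.continuous _).mul (Polynomial.continuous _)).const_mul _).intervalIntegrable _ _
  have hc1 := eq_C_of_derivative_eq_zero hz
  have hz1 : derivative g = 0 := by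
    have h2 : (derivative g).eval a = 0 := by
      rw [hg]; simp [h1, de0_left a b hab]
    rw [hc1, eval_C] at h2
    rw [hc1, h2, C_0]
  have hc0 := eq_C_of_derivative_eq_zero hz1
  have hz0 : g = 0 := by
    have h2 : g.eval a = 0 := by
      rw [hg]; simp [h0, e0_left]
    rw [hc0, eval_C] at h2
    rw [hc0, h2, C_0]
  exact sub_eq_zero.mp hz0

/-- Cauchy-Schwarz for polynomials on an interval. -/
lemma cs (a b : ℝ) (hab : a < b) (f g : ℝ → ℝ) (hf : Continuous f) (hg : Continuous g) :
    ∫ t in a..b, |f t * g t| ≤ √(∫ t in a..b, f t ^ 2) * √(∫ t in a..b, g t ^ 2) := by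
  have hA : 0 ≤ ∫ t in a..b, f t ^ 2 :=
    intervalIntegral.integral_nonneg hab.le (fun _ _ => sq_nonneg _)
  have hi : ∀ h : ℝ → ℝ, Continuous h → IntervalIntegrable h volume a b :=
    fun h hh => hh.intervalIntegrable _ _
  have key : ∀ x : ℝ, 0 ≤ (∫ t in a..b, f t ^ 2) * (x * x) +
      (-2 * ∫ t in a..b, |f t * g t|) * x + ∫ t in a..b, g t ^ 2 := by
    intro x
    have h1 : 0 ≤ ∫ t in a..b, (x * |f t| - |g t|) ^ 2 :=
      intervalIntegral.integral_nonneg hab.le (fun _ _ => sq_nonneg _)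
    have h2 : ∀ t, (x * |f t| - |g t|) ^ 2 =
        ((x * x) * f t ^ 2 + (-2 * x) * |f t * g t|) + g t ^ 2 := by
      intro t
      rw [abs_mul, ← sq_abs (f t), ← sq_abs (g t)]; ring
    simp_rw [h2] at h1
    rw [intervalIntegral.integral_add (hi _ (by fun_prop)) (hi _ (by fun_prop)),
      intervalIntegral.integral_add (hi _ (by fun_prop)) (hi _ (by fun_prop)),
      intervalIntegral.integral_const_mul, intervalIntegral.integral_const_mul] at h1
    linarith
  have := discrim_le_zero key
  rw [discrim] at this
  rw [← Real.sqrt_mul hA]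
  apply Real.le_sqrt_of_sq_le
  linarith

lemma agmon (a b : ℝ) (hab : a < b) (f : ℝ[X]) (ha : f.eval a = 0) (hb : f.eval b = 0)
    (t : ℝ) (ht : t ∈ Set.Icc a b) :
    f.eval t ^ 2 ≤ √(∫ t in a..b, f.eval t ^ 2) * √(∫ t in a..b, (derivative f).eval t ^ 2) := by
  refine le_trans ?_ (cs a b hab _ _ f.continuous (derivative f).continuous)
  set F : ℝ → ℝ := fun t => f.eval t * (derivative f).eval t with hF
  have hFc : Continuous F := f.continuous.mul (derivative f).continuous
  have hd : ∀ x, HasDerivAt (fun t => f.eval t ^ 2 / 2) (F x) x := by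
    intro x
    have := ((f.hasDerivAt x).pow 2).div_const 2
    have h' : F x = ↑2 * eval x f ^ (2 - 1) * eval x (derivative f) / 2 := by
      simp [hF]; ring
    rw [h']
    exact this
  have i1 := intervalIntegral.integral_eq_sub_of_hasDerivAt (a := a) (b := t) (fun x _ => hd x)
    (hFc.intervalIntegrable _ _)
  have i2 := intervalIntegral.integral_eq_sub_of_hasDerivAt (a := t) (b := b) (fun x _ => hd x)
    (hFc.intervalIntegrable _ _)
  have j1 := intervalIntegral.abs_integral_le_integral_abs (μ := volume) (f := F) ht.1
  have j2 := intervalIntegral.abs_integral_le_integral_abs (μ := volume) (f := F) ht.2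
  have k := intervalIntegral.integral_add_adjacent_intervals
    (hFc.abs.intervalIntegrable (μ := volume) a t) (hFc.abs.intervalIntegrable t b)
  have l1 := (le_abs_self _).trans j1
  have l2 := (neg_le_abs _).trans j2
  rw [i1] at l1
  rw [i2] at l2
  simp only [ha, hb] at l1 l2
  change _ ≤ ∫ t in a..b, |F t|
  linarith

/-- the scalar polynomial `⟨h, c⟩` -/
noncomputable def sp {H : Type*} [NormedAddCommGroup H] [InnerProductSpace ℝ H]
    (k : ℕ) (c : ℕ → H) (h : H) : ℝ[X] := ∑ i ∈ Finset.range (k + 1), monomial i ⟪h, c i⟫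

section
variable {H : Type*} [NormedAddCommGroup H] [InnerProductSpace ℝ H]

lemma sp_coeff (k : ℕ) (c : ℕ → H) (hc : ∀ i, k < i → c i = 0) (h : H) (m : ℕ) :
    (sp k c h).coeff m = ⟪h, c m⟫ := by
  simp only [sp, finsetSum_coeff, coeff_monomial]
  rw [Finset.sum_ite_eq']
  split_ifs with hm
  · rfl
  · rw [hc m (by simpa using hm), inner_zero_right]

lemma sp_eval (k : ℕ) (c : ℕ → H) (h : H) (t : ℝ) :
    (sp k c h).eval t = ⟪h, polyEval k c t⟫ := by
  simp only [sp, polyEval, eval_finsetSum, eval_monomial, inner_sum, inner_smul_right]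
  exact Finset.sum_congr rfl fun i _ => mul_comm _ _

lemma dC_zero (k : ℕ) (c : ℕ → H) (hc : ∀ i, k < i → c i = 0) : ∀ i, k < i → dC c i = 0 := by
  intro i hi
  rw [dC, hc (i + 1) (by omega), smul_zero]

lemma sp_dC (k : ℕ) (c : ℕ → H) (hc : ∀ i, k < i → c i = 0) (h : H) :
    sp k (dC c) h = derivative (sp k c h) := by
  ext m
  rw [sp_coeff k _ (dC_zero k c hc), coeff_derivative, sp_coeff k c hc, dC, inner_smul_right]
  ring

lemma polyEval_sub (k : ℕ) (c d : ℕ → H) (t : ℝ) :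
    polyEval k c t - polyEval k d t = polyEval k (fun i => c i - d i) t := by
  simp [polyEval, smul_sub]

lemma dC_sub (c d : ℕ → H) : dC (fun i => c i - d i) = fun i => dC c i - dC d i := by
  funext i; simp [dC, smul_sub]

lemma natDegree_sp (k : ℕ) (c : ℕ → H) (h : H) : (sp k c h).natDegree ≤ k := by
  refine natDegree_sum_le_of_forall_le _ _ fun i hi => ?_
  exact (natDegree_monomial_le _).trans (by simpa [Nat.lt_succ_iff] using hi)

lemma recon_sp (t₀ t₁ : ℝ) (h01 : t₀ < t₁) (n : ℕ)
    (v : ℕ → H) (hv : ∀ i, n + 2 < i → v i = 0) (j : H)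
    (u : ℕ → H) (hu : IsTimeRecon t₀ t₁ (n + 2) v j u) (h : H) :
    sp (n + 3) (fun i => v i - u i) h = C ⟪h, j⟫ * e0 t₀ t₁ n := by
  obtain ⟨hu0, hut, hu1, hu2⟩ := hu
  have hc : ∀ i, n + 3 < i → v i - u i = 0 := by
    intro i hi
    rw [hv i (by omega), hu0 i (by omega), sub_zero]
  have hc1 := dC_zero _ _ hc
  apply uniq t₀ t₁ h01 n _ (natDegree_sp _ _ _)
  · rw [sp_eval, ← polyEval_sub]
    change ⟪h, polyEval (n + 2 + 1) v t₀ - polyEval (n + 2 + 1) u t₀⟫ = 0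
    rw [hu1, sub_self, inner_zero_right]
  · rw [← sp_dC _ _ hc, sp_eval, dC_sub, ← polyEval_sub]
    change ⟪h, polyEval (n + 2 + 1) (dC v) t₀ - polyEval (n + 2 + 1) (dC u) t₀⟫ = _
    rw [hu2]; simp
  · intro w hw
    have hwe : ∀ t, polyEval (n + 2 + 1) (fun i => w.coeff i • h) t = w.eval t • h := by
      intro t
      rw [polyEval, eval_eq_sum_range' (show w.natDegree < n + 2 + 1 + 1 by omega), Finset.sum_smul]
      exact Finset.sum_congr rfl fun i _ => by rw [smul_smul, mul_comm]
    have h1 := hut (fun i => w.coeff i • h) (fun i hi => by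
      rw [coeff_eq_zero_of_natDegree_lt (by omega), zero_smul])
    simp only [hwe, inner_smul_right] at h1
    rw [real_inner_comm j h] at *
    have h2 : ∀ t, (derivative (derivative (sp (n + 3) (fun i => v i - u i) h))).eval t * w.eval t =
        - (w.eval t * ⟪polyEval (n + 2 + 1) (dC (dC u)) t - polyEval (n + 2 + 1) (dC (dC v)) t, h⟫) := by
      intro t
      rw [← sp_dC _ _ hc, ← sp_dC _ _ hc1, sp_eval, dC_sub, dC_sub, ← polyEval_sub,
        real_inner_comm, ← neg_sub (polyEval (n + 3) (dC (dC u)) t), inner_neg_left]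
      ring
    simp_rw [h2]
    rw [intervalIntegral.integral_neg, h1]
    ring

lemma recon_eval (t₀ t₁ : ℝ) (h01 : t₀ < t₁) (n : ℕ)
    (v : ℕ → H) (hv : ∀ i, n + 2 < i → v i = 0) (j : H)
    (u : ℕ → H) (hu : IsTimeRecon t₀ t₁ (n + 2) v j u) (t : ℝ) :
    polyEval (n + 2 + 1) v t - polyEval (n + 2 + 1) u t = (e0 t₀ t₁ n).eval t • j := by
  apply ext_inner_left ℝ
  intro h
  rw [polyEval_sub, ← sp_eval]
  change (sp (n + 3) _ h).eval t = _
  rw [recon_sp t₀ t₁ h01 n v hv j u hu h, eval_C_mul, inner_smul_right, mul_comm]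

lemma recon_deriv (t₀ t₁ : ℝ) (h01 : t₀ < t₁) (n : ℕ)
    (v : ℕ → H) (hv : ∀ i, n + 2 < i → v i = 0) (j : H)
    (u : ℕ → H) (hu : IsTimeRecon t₀ t₁ (n + 2) v j u) (t : ℝ) :
    polyEval (n + 2 + 1) (dC v) t - polyEval (n + 2 + 1) (dC u) t =
      (derivative (e0 t₀ t₁ n)).eval t • j := by
  have hc : ∀ i, n + 3 < i → v i - u i = 0 := by
    intro i hi
    rw [hv i (by omega), hu.1 i (by omega), sub_zero]
  apply ext_inner_left ℝ
  intro h
  rw [polyEval_sub, ← dC_sub, ← sp_eval]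
  change (sp (n + 3) _ h).eval t = _
  rw [sp_dC _ _ hc, recon_sp t₀ t₁ h01 n v hv j u hu h, derivative_C_mul, eval_C_mul,
    inner_smul_right, mul_comm]

end

lemma J_e_c2 (n : ℕ) : √(J (e n * e n)) ≤ c2 (n + 2) := by
  have h := J_e_sq n
  rw [c2]
  split_ifs with hn
  · obtain rfl : n = 0 := by omega
    apply Real.sqrt_le_sqrt
    norm_num at h ⊢
    linarith
  · have hn1 : 1 ≤ n := by omega
    apply Real.sqrt_le_sqrt
    refine h.trans ?_
    have hn2 : (1 : ℝ) ≤ n := by exact_mod_cast hn1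
    push_cast
    apply div_le_div_of_nonneg_left (by positivity)
    · have : (0:ℝ) < (n + 2 : ℝ) - 2 := by linarith
      have : (0:ℝ) < (n + 2 : ℝ) - 1 := by linarith
      have : (0:ℝ) < 2 * (n + 2 : ℝ) - 1 := by linarith
      positivity
    · have : (0:ℝ) ≤ (2 * n + 3) * (2 * n + 5) * (12 * n + 7) := by positivity
      nlinarith

lemma J_de_c1 (n : ℕ) : √(J (derivative (e n) * derivative (e n))) = c1 (n + 2) := by
  rw [c1, J_de_sq]
  congr 2
  · push_cast; ring
  · push_cast; ring

end TR

end

/-- L∞ bound for the time reconstruction error via interpolation: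
`sup_{t ∈ I} ‖V - Û‖² ≤ (∫_I ‖V - Û‖²)^{1/2} (∫_I ‖V' - Û'‖²)^{1/2}`, and consequently
`sup_{t ∈ I} ‖V - Û‖ ≤ (c₁(q) c₂(q))^{1/2} τ ‖j‖`. -/
theorem time_reconstruction_Linfty_interpolation_bound
    {H : Type*} [NormedAddCommGroup H] [InnerProductSpace ℝ H] [CompleteSpace H]
    (t₀ t₁ : ℝ) (h01 : t₀ < t₁) (q : ℕ) (hq : 2 ≤ q)
    (v : ℕ → H) (hv : ∀ i, q < i → v i = 0) (j : H)
    (u : ℕ → H) (hu : IsTimeRecon t₀ t₁ q v j u) :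
    (⨆ t : Set.Icc t₀ t₁, ‖polyEval (q + 1) v t - polyEval (q + 1) u t‖) ^ 2
        ≤ Real.sqrt (∫ t in t₀..t₁, ‖polyEval (q + 1) v t - polyEval (q + 1) u t‖ ^ 2)
          * Real.sqrt
            (∫ t in t₀..t₁, ‖polyEval (q + 1) (dC v) t - polyEval (q + 1) (dC u) t‖ ^ 2) ∧
      (⨆ t : Set.Icc t₀ t₁, ‖polyEval (q + 1) v t - polyEval (q + 1) u t‖)
        ≤ Real.sqrt (c1 q * c2 q) * (t₁ - t₀) * ‖j‖ := by
  obtain ⟨n, rfl⟩ : ∃ n, q = n + 2 := ⟨q - 2, by omega⟩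
  simp only [TR.recon_eval t₀ t₁ h01 n v hv j u hu, TR.recon_deriv t₀ t₁ h01 n v hv j u hu,
    norm_smul, mul_pow, Real.norm_eq_abs, sq_abs, intervalIntegral.integral_mul_const]
  set A := ∫ t in t₀..t₁, Polynomial.eval t (TR.e0 t₀ t₁ n) ^ 2 with hA
  set B := ∫ t in t₀..t₁, Polynomial.eval t (Polynomial.derivative (TR.e0 t₀ t₁ n)) ^ 2 with hB
  have hτ : 0 < t₁ - t₀ := by linarith
  have hA0 : 0 ≤ A := intervalIntegral.integral_nonneg h01.le (fun _ _ => sq_nonneg _)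
  have hB0 : 0 ≤ B := intervalIntegral.integral_nonneg h01.le (fun _ _ => sq_nonneg _)
  have hne : Nonempty (Set.Icc t₀ t₁) := ⟨⟨t₀, le_rfl, h01.le⟩⟩
  have hsup : (⨆ t : Set.Icc t₀ t₁, |Polynomial.eval (t : ℝ) (TR.e0 t₀ t₁ n)| * ‖j‖) ≤
      √(√A * √B) * ‖j‖ := by
    apply ciSup_le
    intro t
    apply mul_le_mul_of_nonneg_right _ (norm_nonneg _)
    apply Real.abs_le_sqrt
    exact TR.agmon t₀ t₁ h01 _ (TR.e0_left _ _ _) (TR.e0_right _ _ h01 _) t t.2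
  have hsup0 : 0 ≤ (⨆ t : Set.Icc t₀ t₁, |Polynomial.eval (t : ℝ) (TR.e0 t₀ t₁ n)| * ‖j‖) :=
    Real.iSup_nonneg fun t => by positivity
  constructor
  · refine (pow_le_pow_left₀ hsup0 hsup 2).trans (le_of_eq ?_)
    rw [mul_pow, Real.sq_sqrt (by positivity), Real.sqrt_mul hA0, Real.sqrt_mul hB0,
      Real.sqrt_sq (norm_nonneg _)]
    ring
  · refine hsup.trans (mul_le_mul_of_nonneg_right ?_ (norm_nonneg _))
    rw [← Real.sqrt_mul hA0, hA, hB, TR.int_e0_sq _ _ h01, TR.int_de0_sq _ _ h01]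
    have h1 := TR.J_e_c2 n
    have h2 := TR.J_de_c1 n
    have hE0 : 0 ≤ TR.J (TR.e n * TR.e n) := by
      have := TR.int_e0_sq _ _ h01 n
      rw [← hA] at this
      have h3 : 0 < (t₁ - t₀) ^ 3 := by positivity
      nlinarith
    rw [← h2]
    calc _ = √((t₁ - t₀) ^ 2 * (√(TR.J (TR.e n * TR.e n)) *
          √(TR.J (Polynomial.derivative (TR.e n) * Polynomial.derivative (TR.e n))))) := by
          rw [show ∀ x y : ℝ, (t₁ - t₀) ^ 3 * x * ((t₁ - t₀) * y) = ((t₁ - t₀) ^ 2) ^ 2 * (x * y) by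
            intro x y; ring, Real.sqrt_mul (by positivity), Real.sqrt_sq (by positivity),
            Real.sqrt_mul hE0]
      _ = (t₁ - t₀) * √(√(TR.J (TR.e n * TR.e n)) *
          √(TR.J (Polynomial.derivative (TR.e n) * Polynomial.derivative (TR.e n)))) := by
          rw [Real.sqrt_mul (by positivity), Real.sqrt_sq hτ.le]
      _ ≤ _ := by
          rw [mul_comm]
          refine mul_le_mul_of_nonneg_right (Real.sqrt_le_sqrt ?_) hτ.le
          rw [mul_comm]
          exact mul_le_mul_of_nonneg_left h1 (Real.sqrt_nonneg _)
end
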